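/- arXiv:1209.1443 — 5 statements merged into one kernel-verified Lean document; each statement's English description precedes it below -/
import Mathlib

section
/- There exists a positive integer N such that for every odd integer n ≥ N and every integer m ≥ 2 the following holds. Let a₁, a₂ be two of the free generators of the free Burnside group B(m,n), let c := a₁a₂a₁⁻¹a₂⁻¹, and set A := (1 + c + ⋯ + c^{n-1})(1 − a₁a₂a₁⁻¹) and B := (1 − a₁)(1 + a₂ + ⋯ + a₂^{n-1}) in ℤ[B(m,n)]. Then A ≠ 0, B ≠ 0, AB = 0, and the pair (A, B) is a nontrivial pair of zero-divisors in ℤ[B(m,n)]. -/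
/-!
Write `a`, `b` for two free generators, `d = a b a⁻¹` and `c = d b⁻¹`, and let `C` and `E` be the
sums of the powers of `c` and of `b`, so that `A = C (1 - d)` and `B = (1 - a) E`. Then `A B = 0`
because `C c = C`, `b E = E`, `d = c b` and `d a = a b`.

The coefficients of `B` are positive exactly on `⟨b⟩` and negative exactly on `a⟨b⟩`; those of `A`
are positive exactly on `⟨c⟩`. If `A = X (1 - h)` and `B = (1 + ⋯ + h ^ (q - 1)) Y`, then `h B = B`,
so left multiplication by `h` preserves `⟨b⟩` and `a⟨b⟩`, whence `h ∈ ⟨b⟩ ∩ a⟨b⟩a⁻¹`. If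
`A = X (1 + ⋯ + h ^ (q - 1))` and `B = (1 - h) Y`, then `A h = A` forces `h ∈ ⟨c⟩`, so that
`(1 + ⋯ + h ^ (q - 1)) B = 0` becomes `q (1 - a) E = 0` in the abelianization, which is false.

It remains to see that `⟨b⟩ ∩ a⟨b⟩a⁻¹` is trivial in `B(m, n)` for `n ≥ 3`. In the group of maps
`x ↦ t ^ k x + v` over a commutative ring, with `b` the multiplication by `t` and `a` the
translation by `1`, an equation `a⁻¹ b ^ k a = b ^ l` forces `t ^ k = 1`. This group has exponent
dividing `n` as soon as `1 + t ^ k + ⋯ + t ^ (k (n - 1)) = 0` for all `k`. Writing `n = q r` with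
`q ≥ 3` a power of a prime `p`, the ring `𝔽_p[t] / (t ^ r - 1) ^ (q - 1)` has this property, and
`t` has order `n` in it by comparing degrees.
-/

open MonoidAlgebra

/-- The free Burnside group `B(m, n)`: the quotient of the free group of rank `m` by the
normal subgroup generated by all `n`-th powers. -/
abbrev FreeBurnsideGroup (m n : ℕ) : Type :=
  FreeGroup (Fin m) ⧸ Subgroup.normalClosure {x : FreeGroup (Fin m) | ∃ y, y ^ n = x}

/-- The free generators of `B(m, n)`: images of the free generators of the free group. -/
def FreeBurnsideGroup.gen (m n : ℕ) (i : Fin m) : FreeBurnsideGroup m n :=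
  QuotientGroup.mk (FreeGroup.of i)

/-- `A, B` is a trivial pair of zero-divisors in `ℤ[G]`: there are `X, Y ∈ ℤ[G]` and
`h ∈ G` of finite order `q > 1` such that either `A = X(1-h)`, `B = (1+h+⋯+h^{q-1})Y`,
or `A = X(1+h+⋯+h^{q-1})`, `B = (1-h)Y`. -/
def IsTrivialPairOfZeroDivisors {G : Type*} [Group G] (A B : MonoidAlgebra ℤ G) : Prop :=
  ∃ (X Y : MonoidAlgebra ℤ G) (h : G) (q : ℕ), 1 < q ∧ orderOf h = q ∧
    ((A = X * (1 - of ℤ G h) ∧ B = (∑ i ∈ Finset.range q, of ℤ G h ^ i) * Y) ∨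
     (A = X * (∑ i ∈ Finset.range q, of ℤ G h ^ i) ∧ B = (1 - of ℤ G h) * Y))

section GeomSum

variable {R : Type*} [Ring R] {x : R} {n : ℕ}

lemma mul_geom_sum_eq_self (hx : x ^ n = 1) :
    x * ∑ i ∈ Finset.range n, x ^ i = ∑ i ∈ Finset.range n, x ^ i := by
  have h := mul_neg_geom_sum x n
  rw [hx, sub_self, sub_mul, one_mul, sub_eq_zero] at h
  exact h.symm

lemma geom_sum_mul_eq_self (hx : x ^ n = 1) :
    (∑ i ∈ Finset.range n, x ^ i) * x = ∑ i ∈ Finset.range n, x ^ i := by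
  have h := geom_sum_mul_neg x n
  rw [hx, sub_self, mul_sub, mul_one, sub_eq_zero] at h
  exact h.symm

lemma pow_eq_one_of_geom_sum_eq_zero (hx : ∑ i ∈ Finset.range n, x ^ i = 0) : x ^ n = 1 := by
  rw [← sub_eq_zero, ← geom_sum_mul, hx, zero_mul]

end GeomSum

section GroupRing

open scoped commutatorElement Finset

lemma coeff_geom_sum_of {R M : Type*} [Semiring R] [Monoid M] [DecidableEq M] (n : ℕ) (g x : M) :
    (∑ i ∈ Finset.range n, of R M g ^ i).coeff x = #{i ∈ Finset.range n | g ^ i = x} := by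
  simp_rw [← map_pow]
  simp [Finsupp.single_apply]

variable {G : Type*} [Group G] {n : ℕ} {a b c d g h x : G} {F : MonoidAlgebra ℤ G}

lemma coeff_geom_sum_of_nonneg (n : ℕ) (g x : G) :
    0 ≤ (∑ i ∈ Finset.range n, of ℤ G g ^ i).coeff x := by
  classical
  rw [coeff_geom_sum_of]
  exact Int.natCast_nonneg _

lemma coeff_geom_sum_of_pos_iff (hn : 0 < n) (hg : g ^ n = 1) :
    0 < (∑ i ∈ Finset.range n, of ℤ G g ^ i).coeff x ↔ x ∈ Subgroup.zpowers g := by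
  classical
  rw [coeff_geom_sum_of, Nat.cast_pos, Finset.card_pos]
  constructor
  · rintro ⟨i, hi⟩
    exact (Finset.mem_filter.1 hi).2 ▸ Subgroup.npow_mem_zpowers g i
  · intro hx
    have hfin : IsOfFinOrder g := isOfFinOrder_iff_pow_eq_one.2 ⟨n, hn, hg⟩
    obtain ⟨k, rfl⟩ := hfin.mem_powers_iff_mem_zpowers.2 hx
    exact ⟨k % n, Finset.mem_filter.2
      ⟨Finset.mem_range.2 (Nat.mod_lt k hn), (pow_eq_pow_mod k hg).symm⟩⟩

lemma coeff_geom_sum_of_eq_zero (hn : 0 < n) (hg : g ^ n = 1) (hx : x ∉ Subgroup.zpowers g) :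
    (∑ i ∈ Finset.range n, of ℤ G g ^ i).coeff x = 0 :=
  le_antisymm (not_lt.1 <| mt (coeff_geom_sum_of_pos_iff hn hg).1 hx)
    (coeff_geom_sum_of_nonneg n g x)

lemma coeff_one_sub_of_mul (a x : G) (F : MonoidAlgebra ℤ G) :
    ((1 - of ℤ G a) * F).coeff x = F.coeff x - F.coeff (a⁻¹ * x) := by
  simp [sub_mul]

lemma coeff_mul_one_sub_of (a x : G) (F : MonoidAlgebra ℤ G) :
    (F * (1 - of ℤ G a)).coeff x = F.coeff x - F.coeff (x * a⁻¹) := by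
  simp [mul_sub]

lemma coeff_mul_left_of_one_sub_of_mul_eq_zero (hF : (1 - of ℤ G h) * F = 0) (x : G) :
    F.coeff (h * x) = F.coeff x := by
  have := coeff_one_sub_of_mul h (h * x) F
  rw [hF, inv_mul_cancel_left] at this
  exact sub_eq_zero.1 this.symm

lemma coeff_mul_right_of_mul_one_sub_of_eq_zero (hF : F * (1 - of ℤ G h) = 0) (x : G) :
    F.coeff (x * h) = F.coeff x := by
  have := coeff_mul_one_sub_of h (x * h) F
  rw [hF, mul_inv_cancel_right] at this
  exact sub_eq_zero.1 this.symm

lemma coeff_one_sub_of_mul_geom_sum_pos_iff (hn : 0 < n) (hb : b ^ n = 1)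
    (ha : a ∉ Subgroup.zpowers b) :
    0 < ((1 - of ℤ G a) * ∑ i ∈ Finset.range n, of ℤ G b ^ i).coeff x ↔
      x ∈ Subgroup.zpowers b := by
  rw [coeff_one_sub_of_mul, ← coeff_geom_sum_of_pos_iff hn hb]
  refine ⟨fun h => h.trans_le (sub_le_self _ (coeff_geom_sum_of_nonneg ..)), fun h => ?_⟩
  have hx := (coeff_geom_sum_of_pos_iff hn hb).1 h
  have hax : a⁻¹ * x ∉ Subgroup.zpowers b := by
    rwa [Subgroup.mul_mem_cancel_right _ hx, inv_mem_iff]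
  rwa [coeff_geom_sum_of_eq_zero hn hb hax, sub_zero]

lemma coeff_one_sub_of_mul_geom_sum_neg_iff (hn : 0 < n) (hb : b ^ n = 1)
    (ha : a ∉ Subgroup.zpowers b) :
    ((1 - of ℤ G a) * ∑ i ∈ Finset.range n, of ℤ G b ^ i).coeff x < 0 ↔
      a⁻¹ * x ∈ Subgroup.zpowers b := by
  rw [coeff_one_sub_of_mul, sub_neg, ← coeff_geom_sum_of_pos_iff hn hb]
  refine ⟨(coeff_geom_sum_of_nonneg ..).trans_lt, fun h => ?_⟩
  have hax := (coeff_geom_sum_of_pos_iff hn hb).1 h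
  have hx : x ∉ Subgroup.zpowers b := fun hx =>
    ha (inv_mem_iff.1 ((Subgroup.mul_mem_cancel_right _ hx).1 hax))
  rwa [coeff_geom_sum_of_eq_zero hn hb hx]

lemma coeff_geom_sum_mul_one_sub_of_pos_iff (hn : 0 < n) (hc : c ^ n = 1)
    (hd : d ∉ Subgroup.zpowers c) :
    0 < ((∑ i ∈ Finset.range n, of ℤ G c ^ i) * (1 - of ℤ G d)).coeff x ↔
      x ∈ Subgroup.zpowers c := by
  rw [coeff_mul_one_sub_of, ← coeff_geom_sum_of_pos_iff hn hc]
  refine ⟨fun h => h.trans_le (sub_le_self _ (coeff_geom_sum_of_nonneg ..)), fun h => ?_⟩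
  have hx := (coeff_geom_sum_of_pos_iff hn hc).1 h
  have hxd : x * d⁻¹ ∉ Subgroup.zpowers c := by
    rwa [Subgroup.mul_mem_cancel_left _ hx, inv_mem_iff]
  rwa [coeff_geom_sum_of_eq_zero hn hc hxd, sub_zero]

lemma one_sub_of_mul_geom_sum_ne_zero (hn : 0 < n) (hb : b ^ n = 1)
    (ha : a ∉ Subgroup.zpowers b) :
    (1 - of ℤ G a) * ∑ i ∈ Finset.range n, of ℤ G b ^ i ≠ 0 := fun h0 => by
  have := (coeff_one_sub_of_mul_geom_sum_pos_iff hn hb ha).2 (one_mem _)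
  rw [h0, coeff_zero, Finsupp.zero_apply] at this
  exact this.false

lemma geom_sum_mul_one_sub_of_ne_zero (hn : 0 < n) (hc : c ^ n = 1)
    (hd : d ∉ Subgroup.zpowers c) :
    (∑ i ∈ Finset.range n, of ℤ G c ^ i) * (1 - of ℤ G d) ≠ 0 := fun h0 => by
  have := (coeff_geom_sum_mul_one_sub_of_pos_iff hn hc hd).2 (one_mem _)
  rw [h0, coeff_zero, Finsupp.zero_apply] at this
  exact this.false

lemma geom_sum_commutator_mul_eq_zero (hb : b ^ n = 1) (hc : ⁅a, b⁆ ^ n = 1) :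
    ((∑ i ∈ Finset.range n, of ℤ G ⁅a, b⁆ ^ i) * (1 - of ℤ G (a * b * a⁻¹))) *
      ((1 - of ℤ G a) * ∑ i ∈ Finset.range n, of ℤ G b ^ i) = 0 := by
  have hE := mul_geom_sum_eq_self (x := of ℤ G b) (n := n) (by rw [← map_pow, hb, map_one])
  have hC := geom_sum_mul_eq_self (x := of ℤ G ⁅a, b⁆) (n := n) (by rw [← map_pow, hc, map_one])
  set E := ∑ i ∈ Finset.range n, of ℤ G b ^ i
  set C := ∑ i ∈ Finset.range n, of ℤ G ⁅a, b⁆ ^ i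
  set d := a * b * a⁻¹ with hd
  have hCd : C * of ℤ G d * E = C * E := by
    have : d = ⁅a, b⁆ * b := by simp [hd, commutatorElement_def]
    rw [this, map_mul, ← mul_assoc, hC, mul_assoc, hE]
  have hda : of ℤ G d * of ℤ G a * E = of ℤ G a * E := by
    have : d * a = a * b := by simp [hd]
    rw [← map_mul, this, map_mul, mul_assoc, hE]
  calc C * (1 - of ℤ G d) * ((1 - of ℤ G a) * E)
      = (C * E - C * of ℤ G d * E) - C * (of ℤ G a * E - of ℤ G d * of ℤ G a * E) := by
        noncomm_ring
    _ = 0 := by rw [hCd, hda, sub_self, sub_self, mul_zero, sub_zero]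

lemma IsTrivialPairOfZeroDivisors.exists_annihilator {A B : MonoidAlgebra ℤ G}
    (hAB : IsTrivialPairOfZeroDivisors A B) :
    ∃ (h : G) (q : ℕ), h ≠ 1 ∧ q ≠ 0 ∧
      ((1 - of ℤ G h) * B = 0 ∨
        A * (1 - of ℤ G h) = 0 ∧ (∑ i ∈ Finset.range q, of ℤ G h ^ i) * B = 0) := by
  obtain ⟨X, Y, h, q, hq, hord, hXY⟩ := hAB
  have hpow : 1 - of ℤ G h ^ q = 0 := by
    rw [← map_pow, ← hord, pow_orderOf_eq_one, map_one, sub_self]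
  refine ⟨h, q, fun h1 => ?_, by omega, hXY.imp ?_ ?_⟩
  · rw [h1, orderOf_one] at hord
    omega
  · rintro ⟨-, rfl⟩
    rw [← mul_assoc, mul_neg_geom_sum, hpow, zero_mul]
  · rintro ⟨rfl, rfl⟩
    rw [mul_assoc, geom_sum_mul_neg, ← mul_assoc, geom_sum_mul_neg, hpow, mul_zero, zero_mul]
    exact ⟨rfl, rfl⟩

lemma mem_zpowers_of_one_sub_of_mul_eq_zero (hn : 0 < n) (hb : b ^ n = 1)
    (ha : a ∉ Subgroup.zpowers b)
    (hh : (1 - of ℤ G h) * ((1 - of ℤ G a) * ∑ i ∈ Finset.range n, of ℤ G b ^ i) = 0) :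
    h ∈ Subgroup.zpowers b ∧ a⁻¹ * h * a ∈ Subgroup.zpowers b := by
  have hinv := coeff_mul_left_of_one_sub_of_mul_eq_zero hh
  constructor
  · rw [← mul_one h, ← coeff_one_sub_of_mul_geom_sum_pos_iff hn hb ha, hinv,
      coeff_one_sub_of_mul_geom_sum_pos_iff hn hb ha]
    exact one_mem _
  · rw [mul_assoc, ← coeff_one_sub_of_mul_geom_sum_neg_iff hn hb ha, hinv,
      coeff_one_sub_of_mul_geom_sum_neg_iff hn hb ha, inv_mul_cancel]
    exact one_mem _

lemma mem_zpowers_of_mul_one_sub_of_eq_zero (hn : 0 < n) (hc : c ^ n = 1)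
    (hd : d ∉ Subgroup.zpowers c)
    (hh : (∑ i ∈ Finset.range n, of ℤ G c ^ i) * (1 - of ℤ G d) * (1 - of ℤ G h) = 0) :
    h ∈ Subgroup.zpowers c := by
  rw [← one_mul h, ← coeff_geom_sum_mul_one_sub_of_pos_iff hn hc hd,
    coeff_mul_right_of_mul_one_sub_of_eq_zero hh, coeff_geom_sum_mul_one_sub_of_pos_iff hn hc hd]
  exact one_mem _

variable {H : Type*}

lemma notMem_zpowers_of_map [Group H] {φ : G →* H} (h : φ a ∉ Subgroup.zpowers (φ b)) :
    a ∉ Subgroup.zpowers b := fun ha =>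
  h (MonoidHom.map_zpowers φ b ▸ Subgroup.mem_map_of_mem φ ha)

lemma geom_sum_mul_one_sub_of_mul_geom_sum_ne_zero [Group H] (φ : G →* H) {q : ℕ} (hq : q ≠ 0)
    (hh : φ h = 1) (hn : 0 < n) (hb : b ^ n = 1) (ha : φ a ∉ Subgroup.zpowers (φ b)) :
    (∑ i ∈ Finset.range q, of ℤ G h ^ i) *
      ((1 - of ℤ G a) * ∑ i ∈ Finset.range n, of ℤ G b ^ i) ≠ 0 := fun h0 => by
  have hφ (g : G) : mapDomainRingHom ℤ φ (of ℤ G g) = of ℤ H (φ g) := by simp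
  have hmap := congrArg (mapDomainRingHom ℤ φ) h0
  simp only [map_mul, map_sub, map_sum, map_pow, map_one, map_zero, hφ, hh, one_pow,
    Finset.sum_const, Finset.card_range, smul_mul_assoc, one_mul, smul_eq_zero, hq,
    false_or] at hmap
  exact one_sub_of_mul_geom_sum_ne_zero hn (by rw [← map_pow, hb, map_one]) ha hmap

variable [CommGroup H] (φ : G →* H)

lemma map_eq_one_of_mem_zpowers_commutator (hx : x ∈ Subgroup.zpowers ⁅a, b⁆) : φ x = 1 := by
  obtain ⟨k, rfl⟩ := hx
  simp [map_commutatorElement, commutatorElement_eq_one_iff_commute.2 (Commute.all (φ a) (φ b))]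

include φ in
lemma conj_notMem_zpowers_commutator (hφb : φ b ≠ 1) :
    a * b * a⁻¹ ∉ Subgroup.zpowers ⁅a, b⁆ := fun hd =>
  hφb (by simpa using map_eq_one_of_mem_zpowers_commutator φ hd)

include φ in
lemma not_isTrivialPairOfZeroDivisors (hn : 0 < n) (hb : b ^ n = 1) (hc : ⁅a, b⁆ ^ n = 1)
    (hφb : φ b ≠ 1) (hφa : φ a ∉ Subgroup.zpowers (φ b))
    (hdisj : ∀ x ∈ Subgroup.zpowers b, a⁻¹ * x * a ∈ Subgroup.zpowers b → x = 1) :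
    ¬ IsTrivialPairOfZeroDivisors
      ((∑ i ∈ Finset.range n, of ℤ G ⁅a, b⁆ ^ i) * (1 - of ℤ G (a * b * a⁻¹)))
      ((1 - of ℤ G a) * ∑ i ∈ Finset.range n, of ℤ G b ^ i) := fun hAB => by
  obtain ⟨h, q, hh, hq, hB | ⟨hA, hB⟩⟩ := hAB.exists_annihilator
  · obtain ⟨hhb, hhab⟩ :=
      mem_zpowers_of_one_sub_of_mul_eq_zero hn hb (notMem_zpowers_of_map hφa) hB
    exact hh (hdisj h hhb hhab)
  · have hhc := mem_zpowers_of_mul_one_sub_of_eq_zero hn hc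
      (conj_notMem_zpowers_commutator φ hφb) hA
    exact geom_sum_mul_one_sub_of_mul_geom_sum_ne_zero φ hq
      (map_eq_one_of_mem_zpowers_commutator φ hhc) hn hb hφa hB

end GroupRing

section AffineGroup

lemma semidirectProduct_pow_left {N G : Type*} [CommGroup N] [Group G] {φ : G →* MulAut N}
    (g : N ⋊[φ] G) (k : ℕ) :
    (g ^ k).left = ∏ i ∈ Finset.range k, φ (g.right ^ i) g.left := by
  have hright (k : ℕ) : (g ^ k).right = g.right ^ k := map_pow SemidirectProduct.rightHom g k
  induction k with
  | zero => simp
  | succ k ih => rw [pow_succ, SemidirectProduct.mul_left, ih, hright, Finset.prod_range_succ]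

variable {R : Type*} [CommRing R]

/-- The action of a group `U` of units of `R` on the additive group of `R` by multiplication. -/
def unitsMulAut (U : Subgroup Rˣ) : U →* MulAut (Multiplicative R) :=
  (MulAutMultiplicative R).symm.toMonoidHom.comp (DistribMulAction.toAddAut U R)

lemma toAdd_unitsMulAut (U : Subgroup Rˣ) (u : U) (v : Multiplicative R) :
    (unitsMulAut U u v).toAdd = ((u : Rˣ) : R) * v.toAdd :=
  rfl

/-- The group of affine maps `x ↦ u x + v` of a commutative ring `R` whose linear part `u` lies in
the group of units `U`, encoded as the semidirect product of the translations by `U`. -/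
abbrev AffineGroup (U : Subgroup Rˣ) : Type _ :=
  Multiplicative R ⋊[unitsMulAut U] U

namespace AffineGroup

variable {U : Subgroup Rˣ} {n : ℕ}

lemma pow_eq_one (hU : ∀ u ∈ U, ∑ i ∈ Finset.range n, (u : R) ^ i = 0) (g : AffineGroup U) :
    g ^ n = 1 := by
  have hleft : (g ^ n).left.toAdd = 0 := calc
    (g ^ n).left.toAdd = ∑ i ∈ Finset.range n, ((g.right : Rˣ) : R) ^ i * g.left.toAdd := by
      rw [semidirectProduct_pow_left, toAdd_prod]
      exact Finset.sum_congr rfl fun i _ => by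
        rw [toAdd_unitsMulAut, Subgroup.coe_pow, Units.val_pow_eq_pow_val]
    _ = 0 := by rw [← Finset.sum_mul, hU _ g.right.2, zero_mul]
  have hright : (g ^ n).right = 1 := by
    have hpow := pow_eq_one_of_geom_sum_eq_zero (hU _ g.right.2)
    rw [← SemidirectProduct.rightHom_eq_right, map_pow]
    ext
    exact hpow
  exact SemidirectProduct.ext hleft hright

/-- The translation `x ↦ x + 1`. -/
def translation (U : Subgroup Rˣ) : AffineGroup U :=
  SemidirectProduct.inl (Multiplicative.ofAdd 1)

lemma eq_one_of_conj_inr_eq_inr {u v : U}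
    (h : (translation U)⁻¹ * SemidirectProduct.inr u * translation U = SemidirectProduct.inr v) :
    u = 1 := by
  have hu : -1 + ((u : Rˣ) : R) = 0 := by
    simpa [translation, toAdd_unitsMulAut, -SemidirectProduct.mk_eq_inl_mul_inr]
      using congrArg (fun g : AffineGroup U => Multiplicative.toAdd g.left) h
  ext
  simpa using (neg_add_eq_zero.1 hu).symm

end AffineGroup

end AffineGroup

lemma exists_eq_prime_pow_mul {n : ℕ} (hn : 3 ≤ n) :
    ∃ p s r : ℕ, p.Prime ∧ 3 ≤ p ^ s ∧ n = p ^ s * r := by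
  obtain ⟨r, hr⟩ | ⟨p, hp, ⟨r, hr⟩, hodd⟩ := Nat.four_dvd_or_exists_odd_prime_and_dvd_of_two_lt hn
  · exact ⟨2, 2, r, Nat.prime_two, by norm_num, hr⟩
  · exact ⟨p, 1, r, hp, by grind [hp.two_le], by rwa [pow_one]⟩

section AdjoinRoot

open Polynomial

variable {R : Type*} [CommRing R]

lemma geom_sum_X_pow_eq (p s r : ℕ) [ExpChar R p] :
    ∑ i ∈ Finset.range (p ^ s * r), (X : R[X]) ^ i =
      (X ^ r - 1) ^ (p ^ s - 1) * ∑ i ∈ Finset.range r, X ^ i := by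
  have hreg : IsRightRegular (X - 1 : R[X]) := (C_1 (R := R) ▸ monic_X_sub_C 1).isRegular.right
  refine hreg ?_
  calc (∑ i ∈ Finset.range (p ^ s * r), (X : R[X]) ^ i) * (X - 1)
      = (X ^ r - 1) ^ p ^ s := by
        rw [geom_sum_mul, sub_pow_expChar_pow, one_pow, ← pow_mul, mul_comm]
    _ = (X ^ r - 1) ^ (p ^ s - 1) * (X ^ r - 1) := by
        rw [← pow_succ, Nat.sub_add_cancel (expChar_pow_pos R p s)]
    _ = (X ^ r - 1) ^ (p ^ s - 1) * (∑ i ∈ Finset.range r, X ^ i) * (X - 1) := by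
        rw [mul_assoc, geom_sum_mul]

lemma X_pow_sub_one_pow_dvd_geom_sum (p s r k : ℕ) [ExpChar R p] :
    ((X : R[X]) ^ r - 1) ^ (p ^ s - 1) ∣ ∑ i ∈ Finset.range (p ^ s * r), (X ^ k) ^ i := by
  have hexp := congrArg (expand R k) (geom_sum_X_pow_eq p s r)
  simp only [map_sum, map_mul, map_sub, map_pow, map_one, expand_X] at hexp
  rw [hexp, pow_right_comm]
  exact Dvd.dvd.mul_right (pow_dvd_pow_of_dvd (sub_one_dvd_pow_sub_one _ k) _) _

lemma geom_sum_root_pow_eq_zero (p s r k : ℕ) [ExpChar R p] :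
    ∑ i ∈ Finset.range (p ^ s * r),
      (AdjoinRoot.root (((X : R[X]) ^ r - 1) ^ (p ^ s - 1)) ^ k) ^ i = 0 := by
  have hdvd := AdjoinRoot.mk_eq_zero.2 (X_pow_sub_one_pow_dvd_geom_sum (R := R) p s r k)
  simpa only [map_sum, map_pow, AdjoinRoot.mk_X] using hdvd

lemma mul_le_of_root_pow_eq_one [Nontrivial R] {k r d : ℕ} (hr : r ≠ 0) (hd : d ≠ 0)
    (hpow : AdjoinRoot.root (((X : R[X]) ^ r - 1) ^ k) ^ d = 1) : k * r ≤ d := by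
  have hdvd : ((X : R[X]) ^ r - C 1) ^ k ∣ X ^ d - C 1 := by
    rw [C_1, ← AdjoinRoot.mk_eq_zero, map_sub, map_pow, AdjoinRoot.mk_X, map_one, hpow, sub_self]
  have hmonic : ((X : R[X]) ^ r - C 1).Monic := monic_X_pow_sub_C 1 hr
  contrapose! hdvd
  refine (hmonic.pow k).not_dvd_of_natDegree_lt (monic_X_pow_sub_C 1 hd).ne_zero ?_
  rwa [hmonic.natDegree_pow, natDegree_X_pow_sub_C, natDegree_X_pow_sub_C]

lemma orderOf_root_X_pow_sub_one_pow [Nontrivial R] {p s r : ℕ} [ExpChar R p] (hq : 3 ≤ p ^ s)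
    (hr : r ≠ 0) :
    orderOf (AdjoinRoot.root (((X : R[X]) ^ r - 1) ^ (p ^ s - 1))) = p ^ s * r := by
  set t := AdjoinRoot.root (((X : R[X]) ^ r - 1) ^ (p ^ s - 1))
  have hn : p ^ s * r ≠ 0 := mul_ne_zero (by omega) hr
  have hdvd : orderOf t ∣ p ^ s * r := orderOf_dvd_of_pow_eq_one <|
    pow_eq_one_of_geom_sum_eq_zero (by simpa using geom_sum_root_pow_eq_zero (R := R) p s r 1)
  have hle : (p ^ s - 1) * r ≤ orderOf t :=
    mul_le_of_root_pow_eq_one hr (ne_zero_of_dvd_ne_zero hn hdvd) (pow_orderOf_eq_one t)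
  have hlt : p ^ s * r < 2 * orderOf t := calc
    p ^ s * r < 2 * (p ^ s - 1) * r := Nat.mul_lt_mul_of_pos_right (by omega) (by omega)
    _ ≤ 2 * orderOf t := by rw [mul_assoc]; gcongr
  exact (Nat.eq_of_dvd_of_lt_two_mul hn hdvd hlt).symm

lemma exists_unit_orderOf_eq {n : ℕ} (hn : 3 ≤ n) :
    ∃ (R : Type) (_ : CommRing R) (t : Rˣ), orderOf t = n ∧
      ∀ u ∈ Subgroup.zpowers t, ∑ i ∈ Finset.range n, (u : R) ^ i = 0 := by
  obtain ⟨p, s, r, hp, hq, rfl⟩ := exists_eq_prime_pow_mul hn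
  have : Fact p.Prime := ⟨hp⟩
  have hr : r ≠ 0 := by rintro rfl; omega
  have hord := orderOf_root_X_pow_sub_one_pow (R := ZMod p) hq hr
  let t : (AdjoinRoot (((X : (ZMod p)[X]) ^ r - 1) ^ (p ^ s - 1)))ˣ :=
    (orderOf_pos_iff.1 (by omega) : IsOfFinOrder (AdjoinRoot.root _)).unit
  have ht : orderOf t = p ^ s * r := hord ▸ orderOf_units.symm
  refine ⟨_, inferInstance, t, ht, fun u hu => ?_⟩
  obtain ⟨k, rfl⟩ := (orderOf_pos_iff.1 (by omega)).mem_powers_iff_mem_zpowers.2 hu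
  exact geom_sum_root_pow_eq_zero p s r k

end AdjoinRoot

lemma exists_group_zpowers_inf_conj_eq_bot {n : ℕ} (hn : 3 ≤ n) :
    ∃ (K : Type) (_ : Group K) (a b : K), (∀ g : K, g ^ n = 1) ∧ orderOf b = n ∧
      ∀ x ∈ Subgroup.zpowers b, a⁻¹ * x * a ∈ Subgroup.zpowers b → x = 1 := by
  obtain ⟨R, _, t, ht, hsum⟩ := exists_unit_orderOf_eq hn
  let τ : Subgroup.zpowers t := ⟨t, Subgroup.mem_zpowers t⟩
  refine ⟨AffineGroup (Subgroup.zpowers t), inferInstance, AffineGroup.translation _,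
    SemidirectProduct.inr τ, AffineGroup.pow_eq_one hsum, ?_, ?_⟩
  · rw [orderOf_injective _ SemidirectProduct.inr_injective, ← ht]
    exact (Subgroup.orderOf_coe τ).symm
  · rintro _ ⟨k, rfl⟩ ⟨l, hl⟩
    simp only [← map_zpow] at hl ⊢
    rw [AffineGroup.eq_one_of_conj_inr_eq_inr hl.symm, map_one]

namespace FreeBurnsideGroup

variable {m n : ℕ}

lemma pow_eq_one (g : FreeBurnsideGroup m n) : g ^ n = 1 := by
  induction g using QuotientGroup.induction_on with
  | H y =>
    rw [← QuotientGroup.mk_pow, QuotientGroup.eq_one_iff]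
    exact Subgroup.subset_normalClosure ⟨y, rfl⟩

/-- The universal property of `B(m, n)`: every map from the generators to a group satisfying
`g ^ n = 1` extends to a homomorphism. -/
def lift {K : Type*} [Group K] (hK : ∀ g : K, g ^ n = 1) (f : Fin m → K) :
    FreeBurnsideGroup m n →* K :=
  QuotientGroup.lift _ (FreeGroup.lift f) <| Subgroup.normalClosure_le_normal <| by
    rintro _ ⟨y, rfl⟩
    simp [MonoidHom.mem_ker, hK]

@[simp]
lemma lift_gen {K : Type*} [Group K] (hK : ∀ g : K, g ^ n = 1) (f : Fin m → K) (i : Fin m) :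
    lift hK f (gen m n i) = f i := by
  simp [lift, gen]

variable {i j : Fin m}

lemma eq_one_of_mem_zpowers_gen (hn : 3 ≤ n) (hij : i ≠ j) {x : FreeBurnsideGroup m n}
    (hx : x ∈ Subgroup.zpowers (gen m n j))
    (hconj : (gen m n i)⁻¹ * x * gen m n i ∈ Subgroup.zpowers (gen m n j)) : x = 1 := by
  obtain ⟨K, _, a, b, hK, hb, hdisj⟩ := exists_group_zpowers_inf_conj_eq_bot hn
  obtain ⟨k, rfl⟩ := hx
  obtain ⟨l, hl⟩ := hconj
  let φ := lift hK fun e => if e = i then a else b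
  have hφi : φ (gen m n i) = a := by simp [φ]
  have hφj : φ (gen m n j) = b := by simp [φ, hij.symm]
  have hbk : b ^ k = 1 := hdisj _ ⟨k, rfl⟩ ⟨l, by simpa [hφi, hφj] using congrArg φ hl⟩
  exact orderOf_dvd_iff_zpow_eq_one.1 <|
    (Int.natCast_dvd_natCast.2 (orderOf_dvd_of_pow_eq_one (pow_eq_one _))).trans
      (hb ▸ orderOf_dvd_iff_zpow_eq_one.2 hbk)

/-- The abelianization of `B(m, n)`: the `i`-th coordinate is the exponent sum of the `i`-th
generator. -/
def exponentSum (m n : ℕ) : FreeBurnsideGroup m n →* Multiplicative (Fin m → ZMod n) :=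
  lift (fun g => Multiplicative.toAdd.injective (by ext; simp)) fun i =>
    Multiplicative.ofAdd (Pi.single i 1)

lemma exponentSum_gen_notMem_zpowers (hn : 1 < n) (hij : i ≠ j) :
    exponentSum m n (gen m n i) ∉ Subgroup.zpowers (exponentSum m n (gen m n j)) := by
  have : Fact (1 < n) := ⟨hn⟩
  rintro ⟨k, hk⟩
  simpa [exponentSum, hij] using congrFun (congrArg Multiplicative.toAdd hk) i

end FreeBurnsideGroup

open FreeBurnsideGroup in
theorem burnside_nontrivial_pair_of_zero_divisors_general {m n : ℕ} (hn : 3 ≤ n) {i j : Fin m}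
    (hij : i ≠ j) :
    let a : FreeBurnsideGroup m n := gen m n i
    let b : FreeBurnsideGroup m n := gen m n j
    let c : FreeBurnsideGroup m n := a * b * a⁻¹ * b⁻¹
    let A : MonoidAlgebra ℤ (FreeBurnsideGroup m n) :=
      (∑ k ∈ Finset.range n, of ℤ (FreeBurnsideGroup m n) c ^ k) *
        (1 - of ℤ (FreeBurnsideGroup m n) (a * b * a⁻¹))
    let B : MonoidAlgebra ℤ (FreeBurnsideGroup m n) :=
      (1 - of ℤ (FreeBurnsideGroup m n) a) *
        (∑ k ∈ Finset.range n, of ℤ (FreeBurnsideGroup m n) b ^ k)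
    A ≠ 0 ∧ B ≠ 0 ∧ A * B = 0 ∧ ¬ IsTrivialPairOfZeroDivisors A B := by
  intro a b c A B
  have hn0 : 0 < n := by omega
  have hφa : exponentSum m n a ∉ Subgroup.zpowers (exponentSum m n b) :=
    exponentSum_gen_notMem_zpowers (by omega) hij
  have hφb : exponentSum m n b ≠ 1 := fun h =>
    exponentSum_gen_notMem_zpowers (by omega) hij.symm (h ▸ one_mem _)
  exact ⟨geom_sum_mul_one_sub_of_ne_zero hn0 (pow_eq_one c)
      (conj_notMem_zpowers_commutator (exponentSum m n) hφb),
    one_sub_of_mul_geom_sum_ne_zero hn0 (pow_eq_one b) (notMem_zpowers_of_map hφa),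
    geom_sum_commutator_mul_eq_zero (pow_eq_one b) (pow_eq_one c),
    not_isTrivialPairOfZeroDivisors (exponentSum m n) hn0 (pow_eq_one b) (pow_eq_one c) hφb hφa
      fun _ => eq_one_of_mem_zpowers_gen hn hij⟩

/-- Theorem 1: there is `N > 0` such that for all odd `n ≥ N` and `m ≥ 2`,
with `a₁, a₂` free generators of `B(m,n)` and `c := a₁a₂a₁⁻¹a₂⁻¹`, the elements
`A := (1 + c + ⋯ + c^{n-1})(1 - a₁a₂a₁⁻¹)` and `B := (1 - a₁)(1 + a₂ + ⋯ + a₂^{n-1})`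
form a nontrivial pair of zero-divisors in `ℤ[B(m,n)]`. -/
theorem burnside_nontrivial_pair_of_zero_divisors :
    ∃ N : ℕ, 0 < N ∧ ∀ (n m : ℕ), N ≤ n → Odd n → ∀ (hm : 2 ≤ m),
      let a₁ : FreeBurnsideGroup m n := FreeBurnsideGroup.gen m n ⟨0, by omega⟩
      let a₂ : FreeBurnsideGroup m n := FreeBurnsideGroup.gen m n ⟨1, by omega⟩
      let c : FreeBurnsideGroup m n := a₁ * a₂ * a₁⁻¹ * a₂⁻¹
      let A : MonoidAlgebra ℤ (FreeBurnsideGroup m n) :=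
        (∑ i ∈ Finset.range n, of ℤ (FreeBurnsideGroup m n) c ^ i) *
          (1 - of ℤ (FreeBurnsideGroup m n) (a₁ * a₂ * a₁⁻¹))
      let B : MonoidAlgebra ℤ (FreeBurnsideGroup m n) :=
        (1 - of ℤ (FreeBurnsideGroup m n) a₁) *
          (∑ i ∈ Finset.range n, of ℤ (FreeBurnsideGroup m n) a₂ ^ i)
      A ≠ 0 ∧ B ≠ 0 ∧ A * B = 0 ∧ ¬ IsTrivialPairOfZeroDivisors A B :=
  ⟨3, by norm_num, fun _ _ hN _ _ =>
    burnside_nontrivial_pair_of_zero_divisors_general hN (by simp)⟩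
end

section
/- Let G be a group that contains a subgroup isomorphic either to a finite noncyclic group, or to the free product C_q * C_r of cyclic groups of orders q and r (each possibly infinite) with 1 < min(q, r) < ∞. Then the integral group ring ℤ[G] contains a nontrivial pair of zero-divisors, i.e., there exist A, B ∈ ℤ[G] with A ≠ 0, B ≠ 0, AB = 0 such that (A, B) is not a trivial pair of zero-divisors. -/
/-!
Write `N_H` for the sum of the elements of a finite subgroup `H`, and `ε` for the augmentation of
`ℤ[G]`, which is its counit. If `B * B = m • B`, then `(m - B) * B = 0`. If moreover `ε B ≠ 0`, then
triviality of this pair forces `(m - B) * N_K = 0` for some finite cyclic subgroup `K` that fixes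
`B` from the left, and `K = 1` would give `B = m`.

For a finite noncyclic subgroup `H`, take `B = N_H` and `m = |H|`. Then `K` fixes `B` only if
`K ≤ H`, so that `B * N_K = |K| • N_H`; this equals `|H| • N_K` only if `K = H`, but `H` is not
cyclic.

For a finite subgroup `H ≠ 1` with `H ∩ bHb⁻¹ = 1` (as for the image of a finite factor of a free
product, with `b` from the other factor), choose `a ≠ 1` in `H`, and take
`B = (1 + 2(1 - a)b) N_H` and `m = |H|`. The identity `N_H (1 - a) = 0` gives `B * B = m • B`. The
coefficients of `B` on the distinct cosets `H`, `bH` and `abH` are `1`, `2` and `-2`, so an element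
that fixes `B` stabilizes `H` and `bH`, that is, it lies in `H ∩ bHb⁻¹ = 1`.
-/

open MonoidAlgebra

section GroupRing

open Coalgebra (counit)

variable {R G : Type*} [Group G]

/-- The sum `N_H` in `R[G]` of the elements of a finite subgroup `H`. -/
noncomputable def subgroupSum (R : Type*) [Semiring R] (H : Subgroup G) [Finite H] : R[G] :=
  ∑ x ∈ (Set.toFinite (H : Set G)).toFinset, of R G x

section Semiring

variable [Semiring R] (H : Subgroup G) [Finite H]

lemma coeff_subgroupSum (g : G) :
    (subgroupSum R H).coeff g = (H : Set G).indicator 1 g := by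
  classical
  simp [subgroupSum, Finsupp.single_apply, Set.indicator_apply]

lemma coeff_mul_of_of_mul_eq {x : G} {B : R[G]} (hx : of R G x * B = B) (g : G) :
    B.coeff (x * g) = B.coeff g := by
  nth_rw 1 [← hx]
  simp

lemma subgroupSum_bot : subgroupSum R (⊥ : Subgroup G) = 1 := by
  simp only [subgroupSum, Subgroup.coe_bot, Set.Finite.toFinset_singleton, Finset.sum_singleton,
    map_one]

lemma sum_range_orderOf_pow_eq_subgroupSum (h : G) [Finite (Subgroup.zpowers h)] :
    ∑ i ∈ Finset.range (orderOf h), of R G h ^ i = subgroupSum R (Subgroup.zpowers h) := by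
  have hh : IsOfFinOrder h := finite_zpowers.mp (Set.toFinite _)
  refine Finset.sum_nbij (h ^ ·) (by simp) ?_ ?_ (by simp)
  · simpa using pow_injOn_Iio_orderOf
  · intro x hx
    classical
    simpa [hh.mem_zpowers_iff_mem_range_orderOf] using hx

variable {H}

lemma of_mul_subgroupSum {x : G} (hx : x ∈ H) : of R G x * subgroupSum R H = subgroupSum R H := by
  classical
  ext g
  simp [coeff_subgroupSum, Set.indicator_apply, H.mul_mem_cancel_left (H.inv_mem hx)]

lemma subgroupSum_mul_of {x : G} (hx : x ∈ H) : subgroupSum R H * of R G x = subgroupSum R H := by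
  classical
  ext g
  simp [coeff_subgroupSum, Set.indicator_apply, H.mul_mem_cancel_right (H.inv_mem hx)]

lemma mul_subgroupSum_of_forall_mul_of_eq {B : R[G]} (hB : ∀ x ∈ H, B * of R G x = B) :
    B * subgroupSum R H = Nat.card H • B := by
  rw [subgroupSum, Finset.mul_sum, Finset.sum_congr rfl fun x hx => hB x (by simpa using hx),
    Finset.sum_const, ← Nat.card_eq_card_finite_toFinset, SetLike.coe_sort_coe]

lemma subgroupSum_mul_subgroupSum_of_le {K : Subgroup G} [Finite K] (hKH : K ≤ H) :
    subgroupSum R H * subgroupSum R K = Nat.card K • subgroupSum R H :=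
  mul_subgroupSum_of_forall_mul_of_eq fun _ hx => subgroupSum_mul_of (hKH hx)

lemma of_mul_subgroupSum_eq_iff [Nontrivial R] {x : G} :
    of R G x * subgroupSum R H = subgroupSum R H ↔ x ∈ H := by
  classical
  refine ⟨fun hx => ?_, of_mul_subgroupSum⟩
  have hcoeff := congrArg (fun B => B.coeff x) hx
  simpa [coeff_subgroupSum, Set.indicator_apply, H.one_mem] using hcoeff

lemma le_of_subgroupSum_mul_eq_nsmul [CharZero R] {K : Subgroup G} [Finite K] (hKH : K ≤ H) {m : ℕ}
    (h : subgroupSum R H * subgroupSum R K = m • subgroupSum R K) : H ≤ K := by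
  intro g hg
  by_contra hgK
  have hcoeff := congrArg (fun B => B.coeff g) h
  rw [subgroupSum_mul_subgroupSum_of_le hKH] at hcoeff
  have hcard : Nat.card K = 0 := by
    simpa [-nsmul_eq_mul, coeff_subgroupSum, hg, hgK] using hcoeff
  exact Nat.card_pos.ne' hcard

end Semiring

@[simp]
lemma counit_subgroupSum [CommSemiring R] (H : Subgroup G) [Finite H] :
    counit (R := R) (subgroupSum R H) = Nat.card H := by
  simp [subgroupSum, ← Nat.card_eq_card_finite_toFinset]

section Ring

variable [Ring R] {H : Subgroup G} [Finite H]

lemma one_sub_of_mul_subgroupSum {x : G} (hx : x ∈ H) :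
    (1 - of R G x) * subgroupSum R H = 0 := by
  rw [sub_mul, one_mul, of_mul_subgroupSum hx, sub_self]

lemma subgroupSum_mul_one_sub_of {x : G} (hx : x ∈ H) :
    subgroupSum R H * (1 - of R G x) = 0 := by
  rw [mul_sub, mul_one, subgroupSum_mul_of hx, sub_self]

end Ring

end GroupRing

section NontrivialPairs

open Coalgebra (counit)

variable {G : Type*} [Group G]

/-- `A, B` is a pair of zero-divisors in `ℤ[G]` that is not trivial. -/
def IsNontrivialPairOfZeroDivisors (A B : ℤ[G]) : Prop :=
  A ≠ 0 ∧ B ≠ 0 ∧ A * B = 0 ∧ ¬ IsTrivialPairOfZeroDivisors A B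

lemma IsTrivialPairOfZeroDivisors.exists_subgroup {A B : ℤ[G]}
    (hAB : IsTrivialPairOfZeroDivisors A B) (hB : counit (R := ℤ) B ≠ 0) :
    ∃ (K : Subgroup G) (_ : Finite K), IsCyclic K ∧ (∀ x ∈ K, of ℤ G x * B = B) ∧
      A * subgroupSum ℤ K = 0 := by
  obtain ⟨X, Y, h, _, hq, rfl, ⟨rfl, rfl⟩ | ⟨-, rfl⟩⟩ := hAB
  · have : Finite (Subgroup.zpowers h) :=
      (finite_zpowers.mpr (orderOf_pos_iff.mp (zero_lt_one.trans hq))).to_subtype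
    rw [sum_range_orderOf_pow_eq_subgroupSum]
    refine ⟨Subgroup.zpowers h, this, inferInstance, fun x hx => ?_, ?_⟩
    · rw [← mul_assoc, of_mul_subgroupSum hx]
    · rw [mul_assoc, one_sub_of_mul_subgroupSum (Subgroup.mem_zpowers h), mul_zero]
  · exact absurd (by simp) hB

lemma isNontrivialPairOfZeroDivisors_of_mul_self_eq_nsmul {B : ℤ[G]} {m : ℕ}
    (hB : counit (R := ℤ) B ≠ 0) (hBB : B * B = m • B)
    (hK : ∀ (K : Subgroup G) [Finite K], IsCyclic K → (∀ x ∈ K, of ℤ G x * B = B) →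
      B * subgroupSum ℤ K ≠ m • subgroupSum ℤ K) :
    IsNontrivialPairOfZeroDivisors (m • 1 - B) B := by
  refine ⟨?_, ?_, ?_, fun htriv => ?_⟩
  · have hbot := hK ⊥ inferInstance fun x hx => by rw [Subgroup.mem_bot.mp hx, map_one, one_mul]
    rw [subgroupSum_bot, mul_one] at hbot
    exact sub_ne_zero.mpr hbot.symm
  · rintro rfl
    simp at hB
  · rw [sub_mul, smul_one_mul, hBB, sub_self]
  · obtain ⟨K, _, hcyc, hfix, hzero⟩ := htriv.exists_subgroup hB
    rw [sub_mul, smul_one_mul, sub_eq_zero] at hzero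
    exact hK K hcyc hfix hzero.symm

theorem isNontrivialPairOfZeroDivisors_subgroupSum (H : Subgroup G) [Finite H]
    (hH : ¬ IsCyclic H) :
    IsNontrivialPairOfZeroDivisors (Nat.card H • 1 - subgroupSum ℤ H) (subgroupSum ℤ H) := by
  refine isNontrivialPairOfZeroDivisors_of_mul_self_eq_nsmul ?_
    (subgroupSum_mul_subgroupSum_of_le le_rfl) fun K _ hcyc hfix hmul => hH ?_
  · simpa using (Nat.card_pos (α := H)).ne'
  · have hKH : K ≤ H := fun x hx => of_mul_subgroupSum_eq_iff.mp (hfix x hx)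
    exact le_antisymm hKH (le_of_subgroupSum_mul_eq_nsmul hKH hmul) ▸ hcyc

end NontrivialPairs

section SkewSubgroupSum

open Coalgebra (counit)
open scoped Pointwise

variable {R G : Type*} [Group G] {H : Subgroup G} [Finite H] {a b : G}

/-- The element `(1 + 2(1 - a)b) N_H` of `R[G]`, a multiple of `N_H` that is still an idempotent up
to the factor `|H|` when `a ∈ H`. With the factor `2`, the coefficients of `N_H`, `b N_H` and
`ab N_H` are distinct. -/
noncomputable def skewSubgroupSum (R : Type*) [Ring R] (H : Subgroup G) [Finite H] (a b : G) :
    R[G] :=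
  (1 + 2 * ((1 - of R G a) * of R G b)) * subgroupSum R H

lemma skewSubgroupSum_mul_self [Ring R] (ha : a ∈ H) :
    skewSubgroupSum R H a b * skewSubgroupSum R H a b =
      Nat.card H • skewSubgroupSum R H a b := by
  have hN : subgroupSum R H * skewSubgroupSum R H a b = subgroupSum R H * subgroupSum R H := by
    calc subgroupSum R H * skewSubgroupSum R H a b
      _ = subgroupSum R H * subgroupSum R H +
          2 * (subgroupSum R H * (1 - of R G a)) * of R G b * subgroupSum R H := by
        rw [skewSubgroupSum]; noncomm_ring
      _ = subgroupSum R H * subgroupSum R H := by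
        rw [subgroupSum_mul_one_sub_of ha]; noncomm_ring
  nth_rw 1 [skewSubgroupSum]
  rw [mul_assoc, hN, subgroupSum_mul_subgroupSum_of_le le_rfl, mul_smul_comm, skewSubgroupSum]

@[simp]
lemma counit_skewSubgroupSum [CommRing R] :
    counit (R := R) (skewSubgroupSum R H a b) = Nat.card H := by
  simp [skewSubgroupSum]

lemma coeff_skewSubgroupSum [Ring R] (g : G) :
    (skewSubgroupSum R H a b).coeff g = (H : Set G).indicator 1 g +
      2 * ((H : Set G).indicator 1 (b⁻¹ * g) - (H : Set G).indicator 1 (b⁻¹ * (a⁻¹ * g))) := by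
  simp [skewSubgroupSum, two_mul, add_mul, sub_mul, mul_assoc, coeff_subgroupSum]

lemma odd_coeff_skewSubgroupSum_iff {g : G} :
    Odd ((skewSubgroupSum ℤ H a b).coeff g) ↔ g ∈ H := by
  classical
  by_cases hg : g ∈ H <;> simp [coeff_skewSubgroupSum, hg]

lemma coeff_skewSubgroupSum_eq_two_iff (hb : b ∉ H) (hab : b⁻¹ * a * b ∉ H) {g : G} :
    (skewSubgroupSum ℤ H a b).coeff g = 2 ↔ b⁻¹ * g ∈ H := by
  have hgH (hg : b⁻¹ * g ∈ H) : g ∉ H := fun h =>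
    hb <| inv_mem_iff.mp <| (H.mul_mem_cancel_right h).mp hg
  have hagH (hg : b⁻¹ * g ∈ H) : b⁻¹ * (a⁻¹ * g) ∉ H := fun h => hab <| by
    simpa [mul_assoc] using H.mul_mem hg (H.inv_mem h)
  classical
  simp only [coeff_skewSubgroupSum, Set.indicator_apply, SetLike.mem_coe, Pi.one_apply]
  grind

lemma coeff_skewSubgroupSum_right (hb : b ∉ H) (hab : b⁻¹ * a * b ∉ H) :
    (skewSubgroupSum ℤ H a b).coeff b = 2 :=
  (coeff_skewSubgroupSum_eq_two_iff hb hab).mpr (by simp [H.one_mem])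

lemma mem_of_of_mul_skewSubgroupSum_eq {x : G}
    (hx : of ℤ G x * skewSubgroupSum ℤ H a b = skewSubgroupSum ℤ H a b) : x ∈ H := by
  have hodd := odd_coeff_skewSubgroupSum_iff (a := a) (b := b) |>.mpr H.one_mem
  rw [← coeff_mul_of_of_mul_eq hx, mul_one] at hodd
  exact odd_coeff_skewSubgroupSum_iff.mp hodd

lemma mem_conj_smul_of_of_mul_skewSubgroupSum_eq (hb : b ∉ H) (hab : b⁻¹ * a * b ∉ H) {x : G}
    (hx : of ℤ G x * skewSubgroupSum ℤ H a b = skewSubgroupSum ℤ H a b) :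
    x ∈ MulAut.conj b • H := by
  have htwo := coeff_skewSubgroupSum_right hb hab
  rw [← coeff_mul_of_of_mul_eq hx, coeff_skewSubgroupSum_eq_two_iff hb hab] at htwo
  simpa [Subgroup.mem_pointwise_smul_iff_inv_smul_mem, mul_assoc] using htwo

theorem isNontrivialPairOfZeroDivisors_skewSubgroupSum (ha : a ∈ H) (ha1 : a ≠ 1)
    (hH : Disjoint H (MulAut.conj b • H)) :
    IsNontrivialPairOfZeroDivisors (Nat.card H • 1 - skewSubgroupSum ℤ H a b)
      (skewSubgroupSum ℤ H a b) := by
  have ha_conj : a ∉ MulAut.conj b • H := fun h => ha1 (Subgroup.disjoint_def.mp hH ha h)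
  have hb : b ∉ H := fun h => ha_conj (by rwa [Subgroup.conj_smul_eq_self_of_mem h])
  have hab : b⁻¹ * a * b ∉ H := by
    simpa [Subgroup.mem_pointwise_smul_iff_inv_smul_mem] using ha_conj
  refine isNontrivialPairOfZeroDivisors_of_mul_self_eq_nsmul ?_
    (skewSubgroupSum_mul_self ha) fun K _ _ hfix hmul => ?_
  · simpa using (Nat.card_pos (α := H)).ne'
  · obtain rfl : K = ⊥ := (Subgroup.eq_bot_iff_forall K).mpr fun x hx =>
      Subgroup.disjoint_def.mp hH (mem_of_of_mul_skewSubgroupSum_eq (hfix x hx))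
        (mem_conj_smul_of_of_mul_skewSubgroupSum_eq hb hab (hfix x hx))
    have htwo := coeff_skewSubgroupSum_right hb hab
    have hb1 : b ≠ 1 := fun h => hb (h ▸ H.one_mem)
    rw [subgroupSum_bot, mul_one] at hmul
    simp [-nsmul_eq_mul, hmul, one_def, hb1.symm] at htwo

end SkewSubgroupSum

section FreeProduct

open Monoid (Coprod)
open scoped Pointwise

variable {G H K : Type*} [Group G] [Group H] [Group K]

lemma map_conj_smul (f : H →* G) (x : H) (L : Subgroup H) :
    (MulAut.conj x • L).map f = MulAut.conj (f x) • L.map f := by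
  ext
  simp [Subgroup.mem_smul_pointwise_iff_exists]

open Classical in
/-- The embedding of `D` into the wreath product `D ≀ᵣ Q` as the factor at `1` of the base. -/
noncomputable def toWreathBase (D Q : Type*) [Group D] [Group Q] : D →* D ≀ᵣ Q where
  toFun d := ⟨Pi.mulSingle 1 d, 1⟩
  map_one' := by ext <;> simp
  map_mul' d d' := by ext <;> simp [Pi.mulSingle_mul]

/-- The canonical map from the free product to the wreath product `H ≀ᵣ K`. -/
noncomputable def coprodToWreath (H K : Type*) [Group H] [Group K] : Coprod H K →* H ≀ᵣ K :=
  Coprod.lift (toWreathBase H K) RegularWreathProduct.inl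

-- In the wreath product, conjugation by `y` moves the base factor at `1` to the one at `y`.
lemma disjoint_range_inl_conj_inr_smul {y : K} (hy : y ≠ 1) :
    Disjoint (Coprod.inl : H →* Coprod H K).range
      (MulAut.conj (Coprod.inr y : Coprod H K) • (Coprod.inl : H →* Coprod H K).range) := by
  rw [Subgroup.disjoint_def]
  rintro _ ⟨x, rfl⟩ hx
  obtain ⟨_, ⟨x', rfl⟩, hxx'⟩ := (Subgroup.mem_smul_pointwise_iff_exists _ _ _).mp hx
  have hleft := congrArg (fun w => (coprodToWreath H K w).left 1) hxx'
  have hx1 : 1 = x := by simpa [coprodToWreath, toWreathBase, hy] using hleft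
  rw [← hx1, map_one]

lemma exists_disjoint_conj_of_coprod [Finite H] [Nontrivial H] [Nontrivial K]
    {f : Coprod H K →* G} (hf : Function.Injective f) :
    ∃ (L : Subgroup G) (b : G), Finite L ∧ Nontrivial L ∧ Disjoint L (MulAut.conj b • L) := by
  obtain ⟨y, hy⟩ := exists_ne (1 : K)
  have hinj : Function.Injective (f.comp (Coprod.inl : H →* Coprod H K)) :=
    hf.comp Coprod.inl_injective
  refine ⟨(f.comp Coprod.inl).range, f (Coprod.inr y),
    .of_equiv H (MonoidHom.ofInjective hinj).toEquiv,
    (MonoidHom.ofInjective hinj).symm.toEquiv.nontrivial, ?_⟩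
  rw [MonoidHom.range_comp, ← map_conj_smul]
  exact Subgroup.disjoint_map hf (disjoint_range_inl_conj_inr_smul hy)

lemma exists_disjoint_conj_of_coprod_zmod {q r : ℕ} (hq : q ≠ 1) (hr : r ≠ 1)
    (hqr : q ≠ 0 ∨ r ≠ 0) {f : Coprod (Multiplicative (ZMod q)) (Multiplicative (ZMod r)) →* G}
    (hf : Function.Injective f) :
    ∃ (L : Subgroup G) (b : G), Finite L ∧ Nontrivial L ∧ Disjoint L (MulAut.conj b • L) := by
  have := ZMod.nontrivial_iff.mpr hq
  have := ZMod.nontrivial_iff.mpr hr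
  rcases hqr with hq0 | hr0
  · have : NeZero q := ⟨hq0⟩
    exact exists_disjoint_conj_of_coprod hf
  · have : NeZero r := ⟨hr0⟩
    exact exists_disjoint_conj_of_coprod (f := f.comp (Coprod.swap _ _))
      (hf.comp Coprod.swap_injective)

end FreeProduct

open scoped Pointwise in
theorem group_ring_has_nontrivial_pair_of_zero_divisors_general {G : Type*} [Group G]
    (hyp : (∃ H : Subgroup G, Finite H ∧ ¬ IsCyclic H) ∨
      ∃ (H : Subgroup G) (b : G), Finite H ∧ Nontrivial H ∧ Disjoint H (MulAut.conj b • H)) :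
    ∃ A B : ℤ[G], IsNontrivialPairOfZeroDivisors A B := by
  rcases hyp with ⟨H, _, hH⟩ | ⟨H, b, _, _, hb⟩
  · exact ⟨_, _, isNontrivialPairOfZeroDivisors_subgroupSum H hH⟩
  · obtain ⟨a, ha1⟩ := exists_ne (1 : H)
    exact ⟨_, _, isNontrivialPairOfZeroDivisors_skewSubgroupSum a.2 (by simpa using ha1) hb⟩

/-- Theorem 2: if `G` contains a subgroup isomorphic either to a finite
noncyclic group, or to a free product `C_q * C_r` of cyclic groups (orders possibly infinite,
encoded as `ZMod q` with `q = 0` meaning infinite) with `1 < min(q, r) < ∞`, then `ℤ[G]`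
contains a nontrivial pair of zero-divisors. -/
theorem group_ring_has_nontrivial_pair_of_zero_divisors {G : Type*} [Group G]
    (hyp : (∃ H : Subgroup G, Finite H ∧ ¬ IsCyclic H) ∨
      (∃ q r : ℕ, (q = 0 ∨ 1 < q) ∧ (r = 0 ∨ 1 < r) ∧ (q ≠ 0 ∨ r ≠ 0) ∧
        ∃ f : Monoid.Coprod (Multiplicative (ZMod q)) (Multiplicative (ZMod r)) →* G,
          Function.Injective f)) :
    ∃ A B : MonoidAlgebra ℤ G, A ≠ 0 ∧ B ≠ 0 ∧ A * B = 0 ∧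
      ¬ IsTrivialPairOfZeroDivisors A B :=
  group_ring_has_nontrivial_pair_of_zero_divisors_general <| hyp.imp_right
    fun ⟨_, _, hq, hr, hqr, _, hf⟩ =>
      exists_disjoint_conj_of_coprod_zmod (by lia) (by lia) hqr hf
end

section
/- Let G be a group, n ≥ 1 an integer, a, b ∈ G, c := aba⁻¹b⁻¹, and d := aba⁻¹. If c^i d ≠ 1 for all i = 0, 1, …, n−1, then (1 + c + ⋯ + c^{n-1})(1 − d) ≠ 0 in ℤ[G]. If a b^j ≠ 1 for all j = 0, 1, …, n−1, then (1 − a)(1 + b + ⋯ + b^{n-1}) ≠ 0 in ℤ[G]. -/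
/-!
After expansion each product is a difference of two sums of group elements. The coefficient of `1`
in a sum of group elements counts the terms equal to `1`: the sum without the factor `d` (or `a`)
contains `c ^ 0 = 1` (or `b ^ 0 = 1`), while by hypothesis the other sum has no such term.
-/

open MonoidAlgebra

section SumOf

variable {R G ι κ : Type*} [Semiring R] [MulOneClass G]

lemma coeff_sum_of [DecidableEq G] (s : Finset ι) (f : ι → G) (x : G) :
    (∑ i ∈ s, of R G (f i)).coeff x = ({i ∈ s | f i = x} : Finset ι).card := by
  simp only [coeff_sum, Finsupp.finsetSum_apply, of_apply, coeff_single, Finsupp.single_apply,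
    Finset.sum_boole]

lemma sum_of_ne_sum_of [CharZero R] {s : Finset ι} {t : Finset κ} {f : ι → G} {g : κ → G} {i : ι}
    (hi : i ∈ s) (hg : ∀ j ∈ t, g j ≠ f i) :
    ∑ i ∈ s, of R G (f i) ≠ ∑ j ∈ t, of R G (g j) := by
  classical
  intro h
  have card_eq : ({k ∈ s | f k = f i} : Finset ι).card = ({j ∈ t | g j = f i} : Finset κ).card := by
    simpa only [coeff_sum_of, Nat.cast_inj] using congrArg (fun p ↦ p.coeff (f i)) h
  rw [Finset.filter_false_of_mem hg, Finset.card_empty, Finset.card_eq_zero] at card_eq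
  exact Finset.filter_eq_empty_iff.mp card_eq hi rfl

end SumOf

theorem factors_ne_zero_general {R G : Type*} [Ring R] [CharZero R] [Monoid G] (x y : G)
    {n : ℕ} (hn : 1 ≤ n) :
    ((∀ i < n, x ^ i * y ≠ 1) → (∑ i ∈ Finset.range n, of R G x ^ i) * (1 - of R G y) ≠ 0) ∧
    ((∀ i < n, y * x ^ i ≠ 1) → (1 - of R G y) * (∑ i ∈ Finset.range n, of R G x ^ i) ≠ 0) := by
  have zero_mem : 0 ∈ Finset.range n := Finset.mem_range.mpr hn
  constructor <;> intro h
  · rw [mul_one_sub, Finset.sum_mul, sub_ne_zero]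
    simp only [← map_pow, ← map_mul]
    exact sum_of_ne_sum_of zero_mem fun i hi ↦ by
      simpa only [pow_zero] using h i (Finset.mem_range.mp hi)
  · rw [one_sub_mul, Finset.mul_sum, sub_ne_zero]
    simp only [← map_pow, ← map_mul]
    exact sum_of_ne_sum_of zero_mem fun i hi ↦ by
      simpa only [pow_zero] using h i (Finset.mem_range.mp hi)

/-- with `c := a b a⁻¹ b⁻¹`, `d := a b a⁻¹`:
if `c^i d ≠ 1` for all `i < n` then `(1 + c + ⋯ + c^{n-1})(1 - d) ≠ 0`, and
if `a b^j ≠ 1` for all `j < n` then `(1 - a)(1 + b + ⋯ + b^{n-1}) ≠ 0`. -/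
theorem factors_ne_zero {G : Type*} [Group G] (a b : G) (n : ℕ) (hn : 1 ≤ n) :
    ((∀ i < n, (a * b * a⁻¹ * b⁻¹) ^ i * (a * b * a⁻¹) ≠ 1) →
      (∑ i ∈ Finset.range n, of ℤ G (a * b * a⁻¹ * b⁻¹) ^ i) *
        (1 - of ℤ G (a * b * a⁻¹)) ≠ 0) ∧
    ((∀ j < n, a * b ^ j ≠ 1) →
      (1 - of ℤ G a) * (∑ i ∈ Finset.range n, of ℤ G b ^ i) ≠ 0) :=
  ⟨(factors_ne_zero_general (a * b * a⁻¹ * b⁻¹) (a * b * a⁻¹) hn).1,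
    (factors_ne_zero_general b a hn).2⟩
end

section
/- Let q, r satisfy 1 < q < ∞ and 1 < r ≤ ∞, with (q, r) ≠ (2, 2), and let G = C_q * C_r be the free product of cyclic groups with canonical generators a (of order q) and b (of order r). Then the subgroup ⟨a, babab⟩ of G generated by a and babab is isomorphic to the free product C_q * C_∞ via the canonical map; that is, babab has infinite order in G and the homomorphism from the free product C_q * ℤ to G sending the canonical generators to a and babab respectively is injective. -/
/-!
Write `t = babab`. Every power `t ^ n` with `n ≠ 0` has a reduced expression that begins and ends
with a letter from the second factor. By inversion it suffices to see this for `n > 0`: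
* if `b² ≠ 1`, then `t ^ n = (baba) b² (aba) b² (aba) ⋯ b² (abab)`, where adjacent copies of `t`
  merge into the letter `b²` without further cancellation;
* if `b² = 1`, then `a² ≠ 1` and `t = b (aba) b⁻¹` is a conjugate of `aba`, whose powers
  `(ab) a² b a² ⋯ a² (ba)` begin and end in the first factor.

Substituting these expressions into a nonempty reduced word of the free product of the first factor
with `ℤ` therefore produces a nonempty reduced word, which is nontrivial.
-/

open Monoid Function

section ReducedWords

variable {ι : Type*} {M : ι → Type*}

section Monoid

variable [∀ i, Monoid (M i)]

lemma neWord_prod_ne_one {i j : ι} (w : CoprodI.NeWord M i j) : w.prod ≠ 1 := by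
  classical
  intro h
  have hempty : w.toWord = CoprodI.Word.empty :=
    CoprodI.Word.equiv.symm.injective (h.trans CoprodI.Word.prod_empty.symm)
  exact w.toList_ne_nil (congrArg CoprodI.Word.toList hempty)

lemma exists_neWord_prod_eq_of_ne_one {x : CoprodI M} (hx : x ≠ 1) :
    ∃ (i j : ι) (w : CoprodI.NeWord M i j), w.prod = x := by
  classical
  obtain ⟨v, rfl⟩ := CoprodI.Word.equiv.symm.surjective x
  have hv : v ≠ CoprodI.Word.empty := by
    rintro rfl
    exact hx CoprodI.Word.prod_empty
  obtain ⟨i, j, w, rfl⟩ := CoprodI.NeWord.of_word v hv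
  exact ⟨i, j, w, rfl⟩

/-- The element `g` of the free product is represented by a nonempty reduced word whose first and
last letters both belong to the factor `M i`. -/
def BeginsAndEndsIn (i : ι) (g : CoprodI M) : Prop :=
  ∃ w : CoprodI.NeWord M i i, w.prod = g

lemma beginsAndEndsIn_of {i : ι} {x : M i} (hx : x ≠ 1) : BeginsAndEndsIn i (CoprodI.of x) :=
  ⟨.singleton x hx, CoprodI.NeWord.prod_singleton x hx⟩

lemma BeginsAndEndsIn.of_mul_mul_of {i j : ι} {g : CoprodI M} (hg : BeginsAndEndsIn i g)
    (hij : i ≠ j) {x y : M j} (hx : x ≠ 1) (hy : y ≠ 1) :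
    BeginsAndEndsIn j (CoprodI.of x * g * CoprodI.of y) := by
  obtain ⟨w, rfl⟩ := hg
  refine ⟨((CoprodI.NeWord.singleton x hx).append hij.symm w).append hij (.singleton y hy), ?_⟩
  simp only [CoprodI.NeWord.append_prod, CoprodI.NeWord.prod_singleton]

/-- The induction carries the head along: each further factor merges its last letter `x` with it. -/
lemma exists_neWord_head_eq_and_prod_eq_pow {i j : ι} (u : CoprodI.NeWord M i j) (hji : j ≠ i)
    {x : M i} (hx : x ≠ 1) (hxu : x * u.head ≠ 1) (n : ℕ) :
    ∃ w : CoprodI.NeWord M i i, w.head = u.head ∧ w.prod = (u.prod * CoprodI.of x) ^ (n + 1) := by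
  induction n with
  | zero => exact ⟨u.append hji (.singleton x hx), rfl, by simp⟩
  | succ n ih =>
    obtain ⟨w, hhead, hprod⟩ := ih
    refine ⟨u.append hji (w.mulHead x (hhead ▸ hxu)), rfl, ?_⟩
    rw [CoprodI.NeWord.append_prod, CoprodI.NeWord.mulHead_prod, hprod, pow_succ' _ (n + 1),
      mul_assoc]

lemma beginsAndEndsIn_pow {i j : ι} (u : CoprodI.NeWord M i j) (hji : j ≠ i) {x : M i}
    (hx : x ≠ 1) (hxu : x * u.head ≠ 1) (n : ℕ) :
    BeginsAndEndsIn i ((u.prod * CoprodI.of x) ^ (n + 1)) :=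
  let ⟨w, _, hw⟩ := exists_neWord_head_eq_and_prod_eq_pow u hji hx hxu n
  ⟨w, hw⟩

end Monoid

section Group

variable [∀ i, Group (M i)]

lemma BeginsAndEndsIn.inv {i : ι} {g : CoprodI M} (hg : BeginsAndEndsIn i g) :
    BeginsAndEndsIn i g⁻¹ := by
  obtain ⟨w, rfl⟩ := hg
  exact ⟨w.inv, w.inv_prod⟩

lemma BeginsAndEndsIn.zpow_of_pow {i : ι} {g : CoprodI M}
    (hg : ∀ n : ℕ, BeginsAndEndsIn i (g ^ (n + 1))) {n : ℤ} (hn : n ≠ 0) :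
    BeginsAndEndsIn i (g ^ n) := by
  rcases n with (_ | n) | n
  · exact absurd rfl hn
  · rw [Int.ofNat_eq_natCast, zpow_natCast]
    exact hg n
  · rw [zpow_negSucc]
    exact (hg n).inv

theorem beginsAndEndsIn_babab_zpow {i j : ι} (hij : i ≠ j) {a : M i} {b : M j} (ha : a ≠ 1)
    (hb : b ≠ 1) (hab : ¬ (a ^ 2 = 1 ∧ b ^ 2 = 1)) {n : ℤ} (hn : n ≠ 0) :
    BeginsAndEndsIn j ((CoprodI.of b * CoprodI.of a * CoprodI.of b * CoprodI.of a *
      CoprodI.of b) ^ n) := by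
  let wa : CoprodI.NeWord M i i := .singleton a ha
  let wb : CoprodI.NeWord M j j := .singleton b hb
  by_cases hb2 : b ^ 2 = 1
  · have haa : a * a ≠ 1 := fun h ↦ hab ⟨(sq a).trans h, hb2⟩
    have h_aba (m : ℕ) :
        BeginsAndEndsIn i (((wa.append hij wb).prod * CoprodI.of a) ^ (m + 1)) :=
      beginsAndEndsIn_pow (wa.append hij wb) hij.symm ha haa m
    have hconj : CoprodI.of b * CoprodI.of a * CoprodI.of b * CoprodI.of a * CoprodI.of b =
        CoprodI.of b * ((wa.append hij wb).prod * CoprodI.of a) * (CoprodI.of b)⁻¹ := by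
      rw [← map_inv, inv_eq_of_mul_eq_one_right ((sq b).symm.trans hb2)]
      simp only [wa, wb, CoprodI.NeWord.append_prod, CoprodI.NeWord.prod_singleton, mul_assoc]
    rw [hconj, conj_zpow, ← map_inv]
    exact (BeginsAndEndsIn.zpow_of_pow h_aba hn).of_mul_mul_of hij hb (inv_ne_one.mpr hb)
  · have hbb : b * b ≠ 1 := fun h ↦ hb2 ((sq b).trans h)
    have h_babab (m : ℕ) : BeginsAndEndsIn j ((CoprodI.of b * CoprodI.of a * CoprodI.of b *
        CoprodI.of a * CoprodI.of b) ^ (m + 1)) := by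
      simpa only [wa, wb, CoprodI.NeWord.append_prod, CoprodI.NeWord.prod_singleton] using
        beginsAndEndsIn_pow (((wb.append hij.symm wa).append hij wb).append hij.symm wa)
          hij hb hbb m
    exact BeginsAndEndsIn.zpow_of_pow h_babab hn

end Group

end ReducedWords

theorem coprodI_lift_injective_of_beginsAndEndsIn {ι κ : Type*} {H : ι → Type*} {M : κ → Type*}
    [∀ i, Group (H i)] [∀ k, Monoid (M k)] {e : ι → κ} (he : Injective e)
    {f : ∀ i, H i →* CoprodI M}
    (hf : ∀ i (h : H i), h ≠ 1 → BeginsAndEndsIn (e i) (f i h)) :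
    Injective (CoprodI.lift f) := by
  have hword {i j : ι} (w : CoprodI.NeWord H i j) :
      ∃ w' : CoprodI.NeWord M (e i) (e j), w'.prod = CoprodI.lift f w.prod := by
    induction w with
    | singleton x hx =>
      obtain ⟨w', hw'⟩ := hf _ x hx
      exact ⟨w', by rw [CoprodI.NeWord.prod_singleton, CoprodI.lift_of, hw']⟩
    | append w₁ hne w₂ ih₁ ih₂ =>
      obtain ⟨u₁, h₁⟩ := ih₁
      obtain ⟨u₂, h₂⟩ := ih₂
      exact ⟨u₁.append (he.ne hne) u₂, by simp [h₁, h₂]⟩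
  refine (injective_iff_map_eq_one _).mpr fun x ↦ not_imp_not.mp fun hx ↦ ?_
  obtain ⟨i, j, w, rfl⟩ := exists_neWord_prod_eq_of_ne_one hx
  obtain ⟨w', hw'⟩ := hword w
  exact hw' ▸ neWord_prod_ne_one w'

section BinaryCoproduct

universe u v

/-- The family indexed by `Bool` with the members `A` and `B`. It lets reduced words, which Mathlib
has for indexed coproducts, be used in `Monoid.Coprod A B`; the two universes are joined by
`ULift`. -/
def PairFamily (A : Type u) (B : Type v) : Bool → Type (max u v)
  | false => ULift.{v} A
  | true => ULift.{u} B

instance (A : Type u) (B : Type v) [Group A] [Group B] : ∀ c, Group (PairFamily A B c)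
  | false => inferInstanceAs (Group (ULift A))
  | true => inferInstanceAs (Group (ULift B))

variable {A : Type u} {B : Type v} [Group A] [Group B]

/-- The canonical homomorphism from the binary coproduct to the coproduct of `PairFamily A B`. -/
def coprodToCoprodI (A : Type u) (B : Type v) [Group A] [Group B] :
    Coprod A B →* CoprodI (PairFamily A B) :=
  Coprod.lift
    ((CoprodI.of (M := PairFamily A B) (i := false)).comp
      (MulEquiv.ulift.symm : A ≃* ULift.{v} A).toMonoidHom)
    ((CoprodI.of (M := PairFamily A B) (i := true)).comp
      (MulEquiv.ulift.symm : B ≃* ULift.{u} B).toMonoidHom)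

/-- The homomorphisms on the members of `PairFamily A B` given by `f` on `A` and `g` on `B`. -/
def pairHom {P : Type*} [Monoid P] (f : A →* P) (g : B →* P) : ∀ c, PairFamily A B c →* P
  | false => f.comp (MulEquiv.ulift : ULift.{v} A ≃* A).toMonoidHom
  | true => g.comp (MulEquiv.ulift : ULift.{u} B ≃* B).toMonoidHom

lemma coprodI_lift_pairHom_comp_coprodToCoprodI {P : Type*} [Monoid P] (f : A →* P) (g : B →* P) :
    (CoprodI.lift (pairHom f g)).comp (coprodToCoprodI A B) = Coprod.lift f g := by
  apply Coprod.hom_ext <;> ext x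
  · exact CoprodI.lift_of (pairHom f g) (i := false) (ULift.up x)
  · exact CoprodI.lift_of (pairHom f g) (i := true) (ULift.up x)

lemma coprodToCoprodI_injective : Injective (coprodToCoprodI A B) := by
  have hid := coprodI_lift_pairHom_comp_coprodToCoprodI (Coprod.inl : A →* Coprod A B) Coprod.inr
  rw [Coprod.lift_inl_inr] at hid
  exact LeftInverse.injective (DFunLike.congr_fun hid)

theorem coprod_lift_injective_of_beginsAndEndsIn {κ : Type*} {M : κ → Type*}
    [∀ k, Monoid (M k)] {i j : κ} (hij : i ≠ j) {f : A →* CoprodI M} {g : B →* CoprodI M}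
    (hf : ∀ x, x ≠ 1 → BeginsAndEndsIn i (f x)) (hg : ∀ y, y ≠ 1 → BeginsAndEndsIn j (g y)) :
    Injective (Coprod.lift f g) := by
  have he : Injective (Bool.rec i j : Bool → κ) := Bool.injective_iff.mpr hij
  have hlift : Injective (CoprodI.lift (pairHom f g)) := by
    refine coprodI_lift_injective_of_beginsAndEndsIn he ?_
    rintro (_ | _) ⟨x⟩ hx
    · exact hf x fun h ↦ hx (congrArg ULift.up h)
    · exact hg x fun h ↦ hx (congrArg ULift.up h)
  rw [← coprodI_lift_pairHom_comp_coprodToCoprodI]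
  exact hlift.comp coprodToCoprodI_injective

lemma beginsAndEndsIn_coprodToCoprodI_inl {x : A} (hx : x ≠ 1) :
    BeginsAndEndsIn false (coprodToCoprodI A B (Coprod.inl x)) :=
  beginsAndEndsIn_of (M := PairFamily A B) (i := false) (ULift.up_injective.ne hx)

lemma beginsAndEndsIn_coprodToCoprodI_babab_zpow {a : A} {b : B} (ha : a ≠ 1) (hb : b ≠ 1)
    (hab : ¬ (a ^ 2 = 1 ∧ b ^ 2 = 1)) {n : ℤ} (hn : n ≠ 0) :
    BeginsAndEndsIn true (coprodToCoprodI A B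
      (Coprod.inr b * Coprod.inl a * Coprod.inr b * Coprod.inl a * Coprod.inr b) ^ n) :=
  beginsAndEndsIn_babab_zpow (M := PairFamily A B) Bool.false_ne_true
    (ULift.up_injective.ne ha) (ULift.up_injective.ne hb)
    (fun h ↦ hab ⟨congrArg ULift.down h.1, congrArg ULift.down h.2⟩) hn

end BinaryCoproduct

lemma not_isOfFinOrder_of_injective_lift {A G : Type*} [Monoid A] [Group G] {f : A →* G} {t : G}
    (h : Injective (Coprod.lift f (zpowersHom G t))) : ¬ IsOfFinOrder t := by
  have hz : Injective (zpowersHom G t) := h.comp Coprod.inr_injective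
  exact injective_zpow_iff_not_isOfFinOrder.mp (hz.comp Multiplicative.ofAdd.injective)

theorem subgroup_gen_by_a_babab_is_free_product_general {A B : Type*} [Group A] [Group B]
    {a : A} {b : B} (ha : a ≠ 1) (hb : b ≠ 1) (hab : ¬ (a ^ 2 = 1 ∧ b ^ 2 = 1)) :
    let t : Coprod A B :=
      Coprod.inr b * Coprod.inl a * Coprod.inr b * Coprod.inl a * Coprod.inr b
    ¬ IsOfFinOrder t ∧
      Injective (Coprod.lift (Coprod.inl : A →* Coprod A B) (zpowersHom (Coprod A B) t)) := by
  intro t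
  have hinj : Injective ((coprodToCoprodI A B).comp
      (Coprod.lift Coprod.inl (zpowersHom (Coprod A B) t))) := by
    rw [Coprod.comp_lift]
    refine coprod_lift_injective_of_beginsAndEndsIn Bool.false_ne_true
      (fun x hx ↦ beginsAndEndsIn_coprodToCoprodI_inl hx) fun n hn ↦ ?_
    rw [MonoidHom.comp_apply, zpowersHom_apply, map_zpow]
    exact beginsAndEndsIn_coprodToCoprodI_babab_zpow ha hb hab hn
  have hlift : Injective (Coprod.lift Coprod.inl (zpowersHom (Coprod A B) t)) :=
    Injective.of_comp hinj
  exact ⟨not_isOfFinOrder_of_injective_lift hlift, hlift⟩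

lemma ofAdd_one_pow_eq_one_iff {n k : ℕ} :
    Multiplicative.ofAdd (1 : ZMod n) ^ k = 1 ↔ n ∣ k := by
  rw [← orderOf_dvd_iff_pow_eq_one, orderOf_ofAdd_eq_addOrderOf, ZMod.addOrderOf_one]

lemma ofAdd_one_ne_one {n : ℕ} (hn : n ≠ 1) : Multiplicative.ofAdd (1 : ZMod n) ≠ 1 := by
  rwa [← pow_one (Multiplicative.ofAdd _), ne_eq, ofAdd_one_pow_eq_one_iff, Nat.dvd_one]

lemma eq_two_of_ofAdd_one_sq_eq_one {n : ℕ} (hn : n ≠ 1)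
    (h : Multiplicative.ofAdd (1 : ZMod n) ^ 2 = 1) : n = 2 :=
  ((Nat.dvd_prime Nat.prime_two).mp (ofAdd_one_pow_eq_one_iff.mp h)).resolve_left hn

/-- let `1 < q < ∞` and `1 < r ≤ ∞` with `(q, r) ≠ (2, 2)` (here `r = 0`
encodes `r = ∞`), and let `G = C_q * C_r` with canonical generators `a` and `b`. Then
`babab` has infinite order in `G`, and the subgroup `⟨a, babab⟩` is canonically isomorphic
to `C_q * C_∞`: the homomorphism `C_q * ℤ →* G` sending the canonical generators to `a`
and `babab` respectively is injective. -/
theorem subgroup_gen_by_a_babab_is_free_product (q r : ℕ) (hq : 1 < q)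
    (hr : r = 0 ∨ 1 < r) (hqr : ¬ (q = 2 ∧ r = 2)) :
    let G := Monoid.Coprod (Multiplicative (ZMod q)) (Multiplicative (ZMod r))
    let a : G := Monoid.Coprod.inl (Multiplicative.ofAdd (1 : ZMod q))
    let b : G := Monoid.Coprod.inr (Multiplicative.ofAdd (1 : ZMod r))
    ¬ IsOfFinOrder (b * a * b * a * b) ∧
    ∃ ψ : Monoid.Coprod (Multiplicative (ZMod q)) (Multiplicative ℤ) →* G,
      ψ (Monoid.Coprod.inl (Multiplicative.ofAdd (1 : ZMod q))) = a ∧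
      ψ (Monoid.Coprod.inr (Multiplicative.ofAdd (1 : ℤ))) = b * a * b * a * b ∧
      Function.Injective ψ := by
  intro G a b
  have hq1 : q ≠ 1 := hq.ne'
  have hr1 : r ≠ 1 := by omega
  obtain ⟨hfin, hinj⟩ := subgroup_gen_by_a_babab_is_free_product_general
    (ofAdd_one_ne_one hq1) (ofAdd_one_ne_one hr1)
    fun h ↦ hqr ⟨eq_two_of_ofAdd_one_sq_eq_one hq1 h.1, eq_two_of_ofAdd_one_sq_eq_one hr1 h.2⟩
  exact ⟨hfin, _, Coprod.lift_apply_inl _ _ _, by simp [a, b], hinj⟩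
end

section
/- For every odd integer n > 1 there exists a group G generated by two elements g₁, g₂ such that: G has exponent n (x^n = 1 for every x ∈ G); G is nilpotent of class at most 2; the elements [g₁, g₂] := g₁g₂g₁⁻¹g₂⁻¹, g₂, and g₁g₂^i for each i = 0, 1, …, n−1 all have order exactly n; g₁g₂g₁⁻¹ ∉ ⟨[g₁, g₂]⟩; and [g₁, g₂]^j g₁g₂g₁⁻¹ ∉ ⟨g₁g₂^i⟩ for all i, j ∈ {0, 1, …, n−1}. -/
/-!
In a group where `c = ⁅a, b⁆` commutes with `a` and `b`, the commutator controls everything else.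
Since `⁅a, b ^ k⁆ = c ^ k`, the order of `c` divides the orders of `a` and of `b`; since
`⁅a * b ^ i, b⁆ = c`, it also divides the order of `a * b ^ i`. Moreover `a * b * a⁻¹ = c * b`, so
if either of the forbidden memberships held, `b` would commute with `a`, because cyclic groups are
abelian.

It remains to find a two-generated group of class two and exponent `n` in which `c` has order `n`:
the Heisenberg group over `ZMod n`. Its `n`-th power map is `(x, y, z) ↦ (0, 0, (n choose 2) x y)`,
which is trivial because `n` divides `n choose 2` when `n` is odd.
-/

open scoped commutatorElement

section CentralCommutator

variable {G : Type*} [Group G] {a b : G}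

lemma mul_mul_inv_eq_commutatorElement_mul (a b : G) : a * b * a⁻¹ = ⁅a, b⁆ * b :=
  conj_eq_commutatorElement_mul

lemma commutatorElement_pow_right_of_commute (h : Commute ⁅a, b⁆ b) (k : ℕ) :
    ⁅a, b ^ k⁆ = ⁅a, b⁆ ^ k := by
  rw [commutatorElement_def, ← conj_pow, mul_mul_inv_eq_commutatorElement_mul, h.mul_pow,
    mul_inv_cancel_right]

lemma orderOf_commutatorElement_dvd_right (h : Commute ⁅a, b⁆ b) : orderOf ⁅a, b⁆ ∣ orderOf b := by
  rw [orderOf_dvd_iff_pow_eq_one, ← commutatorElement_pow_right_of_commute h, pow_orderOf_eq_one,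
    commutatorElement_one_right]

lemma orderOf_commutatorElement_dvd_left (h : Commute ⁅a, b⁆ a) : orderOf ⁅a, b⁆ ∣ orderOf a := by
  rw [← commutatorElement_inv b a, Commute.inv_left_iff] at h
  rw [← commutatorElement_inv b a, orderOf_inv]
  exact orderOf_commutatorElement_dvd_right h

lemma commutatorElement_mul_zpow_left (a b : G) (i : ℤ) : ⁅a * b ^ i, b⁆ = ⁅a, b⁆ := by
  rw [commutatorElement_mul_left_eq_conj_mul, ((Commute.refl b).zpow_left i).commutator_eq, mul_one,
    mul_inv_cancel, one_mul]

lemma orderOf_commutatorElement_dvd_mul_zpow (ha : Commute ⁅a, b⁆ a) (hb : Commute ⁅a, b⁆ b)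
    (i : ℤ) : orderOf ⁅a, b⁆ ∣ orderOf (a * b ^ i) := by
  rw [← commutatorElement_mul_zpow_left a b i]
  apply orderOf_commutatorElement_dvd_left
  rw [commutatorElement_mul_zpow_left]
  exact ha.mul_right (hb.zpow_right i)

lemma conj_notMem_zpowers_commutatorElement (ha : Commute ⁅a, b⁆ a) (hab : ¬Commute a b) :
    a * b * a⁻¹ ∉ Subgroup.zpowers ⁅a, b⁆ := by
  rw [mul_mul_inv_eq_commutatorElement_mul, Subgroup.mul_mem_cancel_left _ (Subgroup.mem_zpowers _)]
  rintro ⟨k, hk : ⁅a, b⁆ ^ k = b⟩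
  exact hab (hk ▸ ha.symm.zpow_right k)

lemma commutatorElement_zpow_mul_conj_notMem_zpowers (ha : Commute ⁅a, b⁆ a)
    (hb : Commute ⁅a, b⁆ b) (hab : ¬Commute a b) (i j : ℤ) :
    ⁅a, b⁆ ^ j * (a * b * a⁻¹) ∉ Subgroup.zpowers (a * b ^ i) := by
  rw [mul_mul_inv_eq_commutatorElement_mul, ← mul_assoc, ← zpow_add_one]
  rintro ⟨k, hk : (a * b ^ i) ^ k = ⁅a, b⁆ ^ (j + 1) * b⟩
  have comm_pow : Commute (a * b ^ i) (⁅a, b⁆ ^ (j + 1)) :=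
    (ha.mul_right (hb.zpow_right i)).symm.zpow_right _
  have comm_b : Commute (a * b ^ i) b := by
    have comm_zpow := (Commute.refl (a * b ^ i)).zpow_right k
    rw [hk] at comm_zpow
    simpa only [inv_mul_cancel_left] using comm_pow.inv_right.mul_right comm_zpow
  have comm_a : Commute (a * b ^ i * (b ^ i)⁻¹) b :=
    comm_b.mul_left ((Commute.refl b).zpow_left i).inv_left
  exact hab (by rwa [mul_inv_cancel_right] at comm_a)

end CentralCommutator

lemma dvd_choose_two_of_odd {n : ℕ} (hn : Odd n) : n ∣ n.choose 2 := by
  rw [Nat.choose_two_right, Nat.mul_div_assoc n (hn.tsub_odd odd_one).two_dvd]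
  exact dvd_mul_right _ _

/-- The Heisenberg group over a ring `R`; over `ZMod n` it is the witness for the theorem. The
triple `(x, y, z)` encodes the upper unitriangular `3 × 3` matrix with superdiagonal `x, y` and
corner entry `z`. -/
@[ext]
structure HeisenbergGroup (R : Type*) where
  x : R
  y : R
  z : R

namespace HeisenbergGroup

variable {R : Type*} [Ring R]

instance : Mul (HeisenbergGroup R) := ⟨fun g h => ⟨g.x + h.x, g.y + h.y, g.z + h.z + g.x * h.y⟩⟩
instance : One (HeisenbergGroup R) := ⟨⟨0, 0, 0⟩⟩
instance : Inv (HeisenbergGroup R) := ⟨fun g => ⟨-g.x, -g.y, -g.z + g.x * g.y⟩⟩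

@[simp] lemma mul_x (g h : HeisenbergGroup R) : (g * h).x = g.x + h.x := rfl
@[simp] lemma mul_y (g h : HeisenbergGroup R) : (g * h).y = g.y + h.y := rfl
@[simp] lemma mul_z (g h : HeisenbergGroup R) : (g * h).z = g.z + h.z + g.x * h.y := rfl
@[simp] lemma one_x : (1 : HeisenbergGroup R).x = 0 := rfl
@[simp] lemma one_y : (1 : HeisenbergGroup R).y = 0 := rfl
@[simp] lemma one_z : (1 : HeisenbergGroup R).z = 0 := rfl
@[simp] lemma inv_x (g : HeisenbergGroup R) : g⁻¹.x = -g.x := rfl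
@[simp] lemma inv_y (g : HeisenbergGroup R) : g⁻¹.y = -g.y := rfl
@[simp] lemma inv_z (g : HeisenbergGroup R) : g⁻¹.z = -g.z + g.x * g.y := rfl

instance : Group (HeisenbergGroup R) :=
  Group.ofLeftAxioms
    (fun g h k => by ext <;> simp only [mul_x, mul_y, mul_z, add_mul, mul_add] <;> abel)
    (fun g => by ext <;> simp)
    (fun g => by ext <;> simp)

lemma pow_eq (g : HeisenbergGroup R) (k : ℕ) :
    g ^ k = ⟨k • g.x, k • g.y, k • g.z + k.choose 2 • (g.x * g.y)⟩ := by
  induction k with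
  | zero => ext <;> simp
  | succ k ih =>
    rw [pow_succ, ih, Nat.choose_succ_succ' k 1, Nat.choose_one_right]
    ext <;> simp only [mul_x, mul_y, mul_z, add_smul, one_smul, smul_mul_assoc]
    abel

lemma pow_eq_one_of_odd {n : ℕ} [CharP R n] (hn : Odd n) (g : HeisenbergGroup R) : g ^ n = 1 := by
  have choose_eq_zero : (n.choose 2 : R) = 0 :=
    (CharP.cast_eq_zero_iff R n _).2 (dvd_choose_two_of_odd hn)
  rw [pow_eq]
  ext <;> simp [choose_eq_zero]

lemma commutatorElement_eq (g h : HeisenbergGroup R) :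
    ⁅g, h⁆ = ⟨0, 0, g.x * h.y - h.x * g.y⟩ := by
  rw [commutatorElement_def, mul_inv_eq_iff_eq_mul, mul_inv_eq_iff_eq_mul]
  ext <;> simp only [mul_x, mul_y, mul_z, zero_add, zero_mul, add_zero]
  · exact add_comm _ _
  · exact add_comm _ _
  · abel

lemma commutator_le_center : commutator (HeisenbergGroup R) ≤ Subgroup.center _ := by
  rw [commutator_def, Subgroup.commutator_le]
  intro g _ h _
  rw [commutatorElement_eq, Subgroup.mem_center_iff]
  intro k
  ext <;> simp [add_comm]

lemma orderOf_mk_zero_zero (z : R) : orderOf (⟨0, 0, z⟩ : HeisenbergGroup R) = addOrderOf z := by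
  refine Nat.dvd_right_iff_eq.1 fun k => ?_
  rw [orderOf_dvd_iff_pow_eq_one, addOrderOf_dvd_iff_nsmul_eq_zero, pow_eq, HeisenbergGroup.ext_iff]
  simp

variable (R) in
/-- The generator `(1, 0, 0)`, playing the role of `g₁`. -/
def X : HeisenbergGroup R := ⟨1, 0, 0⟩

variable (R) in
/-- The generator `(0, 1, 0)`, playing the role of `g₂`. -/
def Y : HeisenbergGroup R := ⟨0, 1, 0⟩

lemma commutatorElement_X_Y : ⁅X R, Y R⁆ = ⟨0, 0, 1⟩ := by
  simp [commutatorElement_eq, X, Y]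

lemma orderOf_commutatorElement_X_Y (n : ℕ) [CharP R n] : orderOf ⁅X R, Y R⁆ = n := by
  rw [commutatorElement_X_Y, orderOf_mk_zero_zero]
  exact CharP.eq R (CharP.addOrderOf_one R) ‹CharP R n›

lemma zpow_eq_of_mul_eq_zero {g : HeisenbergGroup R} (hg : g.x * g.y = 0) (k : ℤ) :
    g ^ k = ⟨k • g.x, k • g.y, k • g.z⟩ := by
  cases k with
  | ofNat k => simp [pow_eq, hg]
  | negSucc k =>
    rw [zpow_negSucc, pow_eq, hg]
    ext <;> simp only [inv_x, inv_y, inv_z, negSucc_zsmul, smul_mul_smul_comm, hg, smul_zero,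
      add_zero]

lemma closure_X_Y (hR : Function.Surjective (Int.cast : ℤ → R)) :
    Subgroup.closure {X R, Y R} = ⊤ := by
  set H := Subgroup.closure {X R, Y R}
  have X_mem : X R ∈ H := Subgroup.subset_closure (Set.mem_insert _ _)
  have Y_mem : Y R ∈ H := Subgroup.subset_closure (Set.mem_insert_of_mem _ rfl)
  have commutator_mem : ⁅X R, Y R⁆ ∈ H :=
    H.mul_mem (H.mul_mem (H.mul_mem X_mem Y_mem) (H.inv_mem X_mem)) (H.inv_mem Y_mem)
  refine H.eq_top_iff'.2 fun ⟨x, y, z⟩ => ?_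
  obtain ⟨k, rfl⟩ := hR x
  obtain ⟨l, rfl⟩ := hR y
  obtain ⟨m, rfl⟩ := hR z
  -- Placing `Y` before `X` makes the cross term of the product vanish.
  have factorization : (⟨k, l, m⟩ : HeisenbergGroup R) = Y R ^ l * X R ^ k * ⁅X R, Y R⁆ ^ m := by
    rw [commutatorElement_X_Y, zpow_eq_of_mul_eq_zero, zpow_eq_of_mul_eq_zero,
      zpow_eq_of_mul_eq_zero] <;> simp [X, Y, HeisenbergGroup.ext_iff]
  rw [factorization]
  exact H.mul_mem (H.mul_mem (H.zpow_mem Y_mem l) (H.zpow_mem X_mem k))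
    (H.zpow_mem commutator_mem m)

end HeisenbergGroup

/-- for every odd `n > 1` there is a two-generated group `G = ⟨g₁, g₂⟩` of
exponent `n`, nilpotent of class at most 2 (commutator subgroup inside the center), in which
`[g₁,g₂]`, `g₂`, and `g₁g₂^i` (for `i = 0, …, n-1`) have order exactly `n`, with
`g₁g₂g₁⁻¹ ∉ ⟨[g₁,g₂]⟩` and `[g₁,g₂]^j g₁g₂g₁⁻¹ ∉ ⟨g₁g₂^i⟩` for all `i, j < n`. -/
theorem exists_nilpotent_class_two_exponent_n_group (n : ℕ) (hn : 1 < n) (hodd : Odd n) :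
    ∃ (G : Type) (_ : Group G) (g₁ g₂ : G),
      Subgroup.closure ({g₁, g₂} : Set G) = ⊤ ∧
      (∀ x : G, x ^ n = 1) ∧
      commutator G ≤ Subgroup.center G ∧
      orderOf (g₁ * g₂ * g₁⁻¹ * g₂⁻¹) = n ∧
      orderOf g₂ = n ∧
      (∀ i < n, orderOf (g₁ * g₂ ^ i) = n) ∧
      g₁ * g₂ * g₁⁻¹ ∉ Subgroup.zpowers (g₁ * g₂ * g₁⁻¹ * g₂⁻¹) ∧
      ∀ i < n, ∀ j < n,
        (g₁ * g₂ * g₁⁻¹ * g₂⁻¹) ^ j * (g₁ * g₂ * g₁⁻¹) ∉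
          Subgroup.zpowers (g₁ * g₂ ^ i) := by
  let X := HeisenbergGroup.X (ZMod n)
  let Y := HeisenbergGroup.Y (ZMod n)
  have exponent (g : HeisenbergGroup (ZMod n)) : g ^ n = 1 := g.pow_eq_one_of_odd hodd
  have order : orderOf ⁅X, Y⁆ = n := HeisenbergGroup.orderOf_commutatorElement_X_Y n
  have central (g : HeisenbergGroup (ZMod n)) : Commute ⁅X, Y⁆ g :=
    (Subgroup.mem_center_iff.1 (HeisenbergGroup.commutator_le_center
      (Subgroup.commutator_mem_commutator (Subgroup.mem_top X) (Subgroup.mem_top Y))) g).symm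
  have not_commute : ¬Commute X Y := fun h => by
    rw [h.commutator_eq, orderOf_one] at order
    exact hn.ne order
  have order_eq {g : HeisenbergGroup (ZMod n)} (h : orderOf ⁅X, Y⁆ ∣ orderOf g) : orderOf g = n :=
    (orderOf_dvd_of_pow_eq_one (exponent g)).antisymm (order.symm.dvd.trans h)
  exact ⟨HeisenbergGroup (ZMod n), inferInstance, X, Y,
    HeisenbergGroup.closure_X_Y ZMod.intCast_surjective, exponent,
    HeisenbergGroup.commutator_le_center, order,
    order_eq (orderOf_commutatorElement_dvd_right (central Y)),
    fun i _ => order_eq (mod_cast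
      orderOf_commutatorElement_dvd_mul_zpow (central X) (central Y) i),
    conj_notMem_zpowers_commutatorElement (central X) not_commute,
    fun i _ j _ => mod_cast
      commutatorElement_zpow_mul_conj_notMem_zpowers (central X) (central Y) not_commute i j⟩
end
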